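/- arXiv:1803.03913 — 2 statements merged into one kernel-verified Lean document; each statement's English description precedes it below -/
import Mathlib

section
/- Let k, ℓ and i be positive integers with i ≥ 2, let G be a {K*_k, S*_ℓ}-free graph, and let a be a vertex of G. Then there exists a set Û ⊆ V(G) with |Û| ≤ f_{k,ℓ}(i) that dominates N^i_G(a) (i.e., N^i_G(a) ⊆ ∪_{u∈Û} N[u]). -/
/-!
Let `Y` be an independent subset of the sphere of radius `i + 1` around `a` and `U` an inclusion-minimal set
of vertices of the sphere of radius `i` dominating `Y`. By minimality every `u ∈ U` has a private
neighbour in `Y`, so a `k`-clique in `U` would give an induced `K*_k`; hence if `|U| ≥ R(k, m)`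
then `U` contains an independent set `U'` of size `m`, joined to its private neighbours by an
induced matching. By induction `U'` is dominated by at most `g(i)` vertices `w` of the previous
sphere, and each such `w` has fewer than `ℓ` neighbours in `U'`, as otherwise there is an induced
`S*_ℓ` centred at `w`. So `m ≤ (ℓ - 1) g(i)`, which yields `|U| ≤ g(i + 1)`
(`exists_dominating_indep`).

For the whole sphere of radius `i`, take `Y` to be a maximal independent subset of it and `U` a set of at most
`g(i)` vertices dominating `Y`. A vertex `z` of the sphere which is not dominated by `U` is adjacent
to some `y ∈ Y`, which in turn is adjacent to some `u ∈ U`. For each `u`, choose an inclusion-minimal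
set `T` of neighbours of `u` in `Y` dominating the corresponding vertices `z`
(`exists_dominating_second`). The set `T` is independent, and its private neighbours contain neither
a `k`-clique (that would give `K*_k`) nor an independent `ℓ`-set (that would give `S*_ℓ` with
centre `u`), so `|T| < R(k, ℓ)`. Altogether `R(k, ℓ) g(i)` vertices suffice.
-/

open SimpleGraph Finset

/-- A set `U` dominates a set `Y` in the graph `G`:
every vertex of `Y` is in the closed neighborhood of some vertex of `U`. -/
def Dominates {V : Type} (G : SimpleGraph V) (U Y : Set V) : Prop :=
  ∀ y ∈ Y, ∃ u ∈ U, u = y ∨ G.Adj u y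

/-- The domination number of a finite graph. -/
noncomputable def domNum {V : Type} [Fintype V] (G : SimpleGraph V) : ℕ :=
  sInf {n | ∃ S : Set V, S.ncard = n ∧ Dominates G S Set.univ}

/-- The graph `K*_n`: a complete graph on `x₁,…,xₙ` (the `inl` vertices)
together with a pendant vertex `yᵢ` (the `inr` vertices) attached to each `xᵢ`. -/
def Kstar (n : ℕ) : SimpleGraph (Fin n ⊕ Fin n) :=
  SimpleGraph.fromRel (fun a b => match a, b with
    | Sum.inl _, Sum.inl _ => True
    | Sum.inl i, Sum.inr j => i = j
    | _, _ => False)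

/-- The graph `S*_n`: a star with center `x` (= `none`), leaves `yᵢ` (= `some (inl i)`),
with every edge subdivided by `zᵢ` (= `some (inr i)`): edges `x yᵢ` and `yᵢ zᵢ`. -/
def Sstar (n : ℕ) : SimpleGraph (Option (Fin n ⊕ Fin n)) :=
  SimpleGraph.fromRel (fun a b => match a, b with
    | none, some (Sum.inl _) => True
    | some (Sum.inl i), some (Sum.inr j) => i = j
    | _, _ => False)

/-- `N^i_G(a)`: the set of vertices at distance exactly `i` from `a` in `G`. -/
def sphere {V : Type} (G : SimpleGraph V) (a : V) (i : ℕ) : Set V :=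
  {v | G.Reachable a v ∧ G.dist a v = i}

/-- An independent set of vertices. -/
def Indep {V : Type} (G : SimpleGraph V) (X : Set V) : Prop :=
  ∀ x ∈ X, ∀ y ∈ X, x ≠ y → ¬ G.Adj x y

/-- `N` vertices suffice to force a clique of size `s` or an independent set of size `t`. -/
def RamseyProp (N s t : ℕ) : Prop :=
  ∀ G : SimpleGraph (Fin N),
    (∃ A : Finset (Fin N), G.IsNClique s A) ∨ (∃ B : Finset (Fin N), Gᶜ.IsNClique t B)

/-- The Ramsey number `R(s,t)`. -/
noncomputable def ramsey (s t : ℕ) : ℕ := sInf {N | RamseyProp N s t}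

/-- The function `g_{k,ℓ}` with `g(1) = 1` and `g(i) = R(k, (ℓ-1)g(i-1)+1) - 1` for `i ≥ 2`. -/
noncomputable def gfun (k l : ℕ) : ℕ → ℕ
  | 0 => 1
  | 1 => 1
  | (i + 2) => ramsey k ((l - 1) * gfun k l (i + 1) + 1) - 1

/-- The function `f_{k,ℓ}(i) = R(k,ℓ) ⬝ g_{k,ℓ}(i)`. -/
noncomputable def ffun (k l i : ℕ) : ℕ := ramsey k l * gfun k l i

/-- A finite graph, encoded with vertex set `Fin n`. -/
abbrev FinGraph := Σ n : ℕ, SimpleGraph (Fin n)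

/-- `G` is `𝓗`-free: no member of `𝓗` is an induced subgraph of `G`. -/
def HFree (𝓗 : Set FinGraph) {V : Type} (G : SimpleGraph V) : Prop :=
  ∀ H ∈ 𝓗, IsEmpty (H.2 ↪g G)

/-! ### Ramsey numbers -/

/-- Finite Ramsey theorem, inside a finite set of vertices of an arbitrary graph. -/
lemma ramsey_exists (s t : ℕ) : ∃ N : ℕ, ∀ (V : Type) (G : SimpleGraph V) (U : Finset V),
    N ≤ U.card →
    (∃ A ⊆ U, G.IsNClique s A) ∨ (∃ B ⊆ U, Gᶜ.IsNClique t B) := by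
  classical
  induction s generalizing t with
  | zero => exact ⟨0, fun V G U _ => Or.inl ⟨∅, by simp, by simp [SimpleGraph.isNClique_iff]⟩⟩
  | succ s ihs =>
    induction t with
    | zero => exact ⟨0, fun V G U _ => Or.inr ⟨∅, by simp, by simp [SimpleGraph.isNClique_iff]⟩⟩
    | succ t iht =>
      obtain ⟨N₁, h₁⟩ := ihs (t + 1)
      obtain ⟨N₂, h₂⟩ := iht
      refine ⟨N₁ + N₂ + 1, fun V G U hU => ?_⟩
      obtain ⟨v, hv⟩ : U.Nonempty := Finset.card_pos.mp (by omega)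
      have hc := Finset.card_erase_of_mem hv
      have hs := Finset.card_filter_add_card_filter_not (s := U.erase v) (fun w => G.Adj v w)
      by_cases h : N₁ ≤ ((U.erase v).filter (fun w => G.Adj v w)).card
      · rcases h₁ V G _ h with ⟨A, hA, hA'⟩ | ⟨B, hB, hB'⟩
        · refine Or.inl ⟨insert v A, ?_, hA'.insert fun b hb => ?_⟩
          · intro w hw
            rcases Finset.mem_insert.mp hw with rfl | hw
            · exact hv
            · have := hA hw; simp at this; exact this.1.2
          · have := hA hb; simp at this; exact this.2
        · refine Or.inr ⟨B, ?_, hB'⟩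
          intro w hw
          have := hB hw; simp at this; exact this.1.2
      · have h' : N₂ ≤ ((U.erase v).filter (fun w => ¬ G.Adj v w)).card := by omega
        rcases h₂ V G _ h' with ⟨A, hA, hA'⟩ | ⟨B, hB, hB'⟩
        · refine Or.inl ⟨A, ?_, hA'⟩
          intro w hw
          have := hA hw; simp at this; exact this.1.2
        · refine Or.inr ⟨insert v B, ?_, hB'.insert fun b hb => ?_⟩
          · intro w hw
            rcases Finset.mem_insert.mp hw with rfl | hw
            · exact hv
            · have := hB hw; simp at this; exact this.1.2
          · have := hB hb; simp at this
            rw [SimpleGraph.compl_adj]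
            exact ⟨fun e => this.1.1 e.symm, this.2⟩

/-- The infimum defining the Ramsey number is attained. -/
lemma ramseyProp_ramsey (s t : ℕ) : RamseyProp (ramsey s t) s t := by
  refine Nat.sInf_mem (s := {N | RamseyProp N s t}) ?_
  obtain ⟨N, hN⟩ := ramsey_exists s t
  refine ⟨N, fun G => ?_⟩
  rcases hN (Fin N) G Finset.univ (by simp) with ⟨A, _, hA⟩ | ⟨B, _, hB⟩
  · exact Or.inl ⟨A, hA⟩
  · exact Or.inr ⟨B, hB⟩

lemma exists_fin_embedding {V : Type} (S : Finset V) (n : ℕ) (h : n ≤ S.card) :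
    ∃ e : Fin n → V, Function.Injective e ∧ ∀ i, e i ∈ S := by
  obtain ⟨f⟩ : Nonempty (Fin n ↪ S) := Function.Embedding.nonempty_of_card_le (by simpa using h)
  exact ⟨fun i => f i, fun i j hij => f.injective (Subtype.ext hij), fun i => (f i).2⟩

lemma ramsey_fin {V : Type} (G : SimpleGraph V) (U : Finset V) (s t : ℕ)
    (h : ramsey s t ≤ U.card) :
    (∃ e : Fin s → V, (∀ i, e i ∈ U) ∧ ∀ i j, i ≠ j → G.Adj (e i) (e j)) ∨
    (∃ e : Fin t → V, Function.Injective e ∧ (∀ i, e i ∈ U) ∧ ∀ i j, ¬ G.Adj (e i) (e j)) := by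
  obtain ⟨f, hf, hfU⟩ := exists_fin_embedding U _ h
  rcases ramseyProp_ramsey s t (G.comap f) with ⟨A, hA⟩ | ⟨B, hB⟩
  · obtain ⟨e, he, heA⟩ := exists_fin_embedding A s hA.card_eq.ge
    exact Or.inl ⟨f ∘ e, fun i => hfU _, fun i j hij =>
      hA.isClique (heA i) (heA j) (he.ne hij)⟩
  · obtain ⟨e, he, heB⟩ := exists_fin_embedding B t hB.card_eq.ge
    refine Or.inr ⟨f ∘ e, hf.comp he, fun i => hfU _, fun i j hadj => ?_⟩
    have hij : e i ≠ e j := fun h => hadj.ne (congrArg f h)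
    exact (hB.isClique (heB i) (heB j) hij).2 hadj

/-! ### The forbidden induced subgraphs -/

/-- The adjacencies alone force all the vertices `x i`, `y j` to be distinct. -/
lemma kstar_false {V : Type} {G : SimpleGraph V} {k : ℕ} (hK : IsEmpty (Kstar k ↪g G))
    (x y : Fin k → V) (hx : ∀ i j, i ≠ j → G.Adj (x i) (x j))
    (hxy : ∀ i j, G.Adj (x i) (y j) ↔ i = j) (hy : ∀ i j, ¬ G.Adj (y i) (y j)) : False := by
  have hne : ∀ i j, x i ≠ y j := fun i j h => hy j i (h ▸ (hxy i i).2 rfl)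
  have hxi : ∀ i j, x i = x j → i = j := fun i j h => by
    by_contra hij; exact (hx i j hij).ne h
  have hyi : ∀ i j, y i = y j → i = j := fun i j h => (hxy i j).1 (h ▸ (hxy i i).2 rfl)
  refine hK.false ⟨⟨Sum.elim x y, ?_⟩, ?_⟩
  · rintro (i | i) (j | j) h
    · exact congrArg _ (hxi i j h)
    · exact (hne i j h).elim
    · exact (hne j i h.symm).elim
    · exact congrArg _ (hyi i j h)
  · rintro (i | i) (j | j)
    · simp only [Kstar, SimpleGraph.fromRel_adj]
      simp
      exact ⟨fun h e => h.ne (congrArg x e), hx i j⟩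
    · simp [Kstar, SimpleGraph.fromRel_adj, DFunLike.coe, hxy]
    · simp [Kstar, SimpleGraph.fromRel_adj, DFunLike.coe, G.adj_comm (y i), hxy]
    · simp [Kstar, SimpleGraph.fromRel_adj, DFunLike.coe, hy]

/-- The only distinctness not forced by the adjacencies is that of `c` and the `z i`. -/
lemma sstar_false {V : Type} {G : SimpleGraph V} {l : ℕ} (hS : IsEmpty (Sstar l ↪g G))
    (c : V) (y z : Fin l → V) (hcy : ∀ i, G.Adj c (y i)) (hcz : ∀ i, ¬ G.Adj c (z i))
    (hcz' : ∀ i, c ≠ z i) (hy : ∀ i j, ¬ G.Adj (y i) (y j))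
    (hyz : ∀ i j, G.Adj (y i) (z j) ↔ i = j) (hz : ∀ i j, ¬ G.Adj (z i) (z j)) : False := by
  have hne : ∀ i j, y i ≠ z j := fun i j h => hz j i (h ▸ (hyz i i).2 rfl)
  have hyi : ∀ i j, y i = y j → i = j := fun i j h => ((hyz j i).1 (h ▸ (hyz i i).2 rfl)).symm
  have hzi : ∀ i j, z i = z j → i = j := fun i j h => (hyz i j).1 (h ▸ (hyz i i).2 rfl)
  refine hS.false ⟨⟨fun o => o.elim c (Sum.elim y z), ?_⟩, ?_⟩
  · rintro (_ | i | i) (_ | j | j) h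
    · rfl
    · exact ((hcy j).ne h).elim
    · exact (hcz' j h).elim
    · exact ((hcy i).ne h.symm).elim
    · exact congrArg (fun t => some (Sum.inl t)) (hyi i j h)
    · exact (hne i j h).elim
    · exact (hcz' i h.symm).elim
    · exact (hne j i h.symm).elim
    · exact congrArg (fun t => some (Sum.inr t)) (hzi i j h)
  · rintro (_ | i | i) (_ | j | j)
    · simp [Sstar, DFunLike.coe]
    · simp [Sstar, SimpleGraph.fromRel_adj, DFunLike.coe, hcy]
    · simp [Sstar, SimpleGraph.fromRel_adj, DFunLike.coe, hcz]
    · simp [Sstar, SimpleGraph.fromRel_adj, DFunLike.coe, (hcy i).symm]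
    · simp [Sstar, SimpleGraph.fromRel_adj, DFunLike.coe, hy]
    · simp [Sstar, SimpleGraph.fromRel_adj, DFunLike.coe, hyz]
    · simp [Sstar, SimpleGraph.fromRel_adj, DFunLike.coe, G.adj_comm (z i) c, hcz]
    · simp [Sstar, SimpleGraph.fromRel_adj, DFunLike.coe, G.adj_comm (z i), hyz]
    · simp [Sstar, SimpleGraph.fromRel_adj, DFunLike.coe, hz]

/-! ### Minimal dominating sets and spheres -/

/-- An inclusion-minimal dominating subset of `X`, with a choice `p` of private neighbours. -/
lemma exists_minimal_dom {V : Type} [Fintype V] (G : SimpleGraph V) (X Y : Set V)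
    (h : ∀ y ∈ Y, ∃ x ∈ X, G.Adj x y) :
    ∃ (U : Finset V) (p : V → V), (∀ u ∈ U, u ∈ X) ∧ (∀ y ∈ Y, ∃ u ∈ U, G.Adj u y) ∧
      (∀ u ∈ U, p u ∈ Y) ∧ ∀ u ∈ U, ∀ v ∈ U, G.Adj u (p v) ↔ u = v := by
  classical
  let P : Finset V → Prop := fun U => (∀ u ∈ U, u ∈ X) ∧ ∀ y ∈ Y, ∃ u ∈ U, G.Adj u y
  have hP : P (Finset.univ.filter (· ∈ X)) := ⟨by simp, by simpa using h⟩
  obtain ⟨U, -, hU⟩ := (Set.toFinite {U | P U}).exists_le_minimal hP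
  have key : ∀ u ∈ U, ∃ y ∈ Y, ∀ v ∈ U, G.Adj v y ↔ v = u := by
    intro u hu
    by_contra! hcon
    have hPe : P (U.erase u) := by
      refine ⟨fun v hv => hU.prop.1 v (Finset.mem_of_mem_erase hv), fun y hy => ?_⟩
      obtain ⟨w, hw, hwy⟩ := hU.prop.2 y hy
      by_cases hwu : w = u
      · subst hwu
        obtain ⟨v, hv, hv'⟩ := hcon y hy
        rcases hv' with ⟨h1, h2⟩ | ⟨h1, h2⟩
        · exact ⟨v, Finset.mem_erase.mpr ⟨h2, hv⟩, h1⟩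
        · exact (h1 (h2 ▸ hwy)).elim
      · exact ⟨w, Finset.mem_erase.mpr ⟨hwu, hw⟩, hwy⟩
    exact Finset.notMem_erase u U (hU.le_of_le hPe (Finset.erase_subset _ _) hu)
  choose! p hpY hp using key
  exact ⟨U, p, hU.prop.1, hU.prop.2, hpY, fun u hu v hv => hp v hv u hu⟩

lemma sphere_pred {V : Type} {G : SimpleGraph V} {a y : V} {i : ℕ} (hy : y ∈ sphere G a (i + 1)) :
    ∃ x ∈ sphere G a i, G.Adj x y := by
  obtain ⟨hr, hd⟩ := hy
  obtain ⟨w, hw⟩ := hr.symm.exists_walk_length_eq_dist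
  rw [SimpleGraph.dist_comm, hd] at hw
  cases w with
  | nil => simp at hw
  | @cons _ x _ hadj q =>
    simp only [SimpleGraph.Walk.length_cons, Nat.add_right_cancel_iff] at hw
    refine ⟨x, ⟨q.reachable.symm, le_antisymm ?_ ?_⟩, hadj.symm⟩
    · rw [SimpleGraph.dist_comm, ← hw]; exact SimpleGraph.dist_le q
    · obtain ⟨r, hr'⟩ := q.reachable.symm.exists_walk_length_eq_dist
      have := SimpleGraph.dist_le (r.concat hadj.symm)
      rw [SimpleGraph.Walk.length_concat] at this
      omega

lemma sphere_not_adj {V : Type} {G : SimpleGraph V} {a x y : V} {i : ℕ} (hx : x ∈ sphere G a i)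
    (hy : y ∈ sphere G a (i + 2)) : ¬ G.Adj x y := by
  intro hadj
  obtain ⟨r, hr⟩ := hx.1.exists_walk_length_eq_dist
  have := SimpleGraph.dist_le (r.concat hadj)
  rw [SimpleGraph.Walk.length_concat] at this
  have := hx.2
  have := hy.2
  omega

lemma sphere_ne {V : Type} {G : SimpleGraph V} {a x y : V} {i j : ℕ} (hx : x ∈ sphere G a i)
    (hy : y ∈ sphere G a j) (hij : i ≠ j) : x ≠ y := by
  rintro rfl
  exact hij (hx.2.symm.trans hy.2)

/-! ### Dominating spheres -/

/-- An independent subset of a sphere is dominated by few vertices of the previous sphere. -/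
lemma exists_dominating_indep {V : Type} [Fintype V] {G : SimpleGraph V} {k l : ℕ}
    (hl : 0 < l) (hK : IsEmpty (Kstar k ↪g G)) (hS : IsEmpty (Sstar l ↪g G)) (a : V) (i : ℕ)
    (Y : Set V) (hY : Y ⊆ sphere G a (i + 1)) (hI : Indep G Y) :
    ∃ U : Finset V, (∀ u ∈ U, u ∈ sphere G a i) ∧ U.card ≤ gfun k l (i + 1) ∧
      ∀ y ∈ Y, ∃ u ∈ U, G.Adj u y := by
  classical
  induction i generalizing Y with
  | zero =>
    have ha : ∀ x ∈ sphere G a 0, x = a := fun x hx => (hx.1.dist_eq_zero_iff.mp hx.2).symm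
    refine ⟨{a}, ?_, by simp [gfun], fun y hy => ?_⟩
    · simp [sphere]
    · obtain ⟨x, hx, hxy⟩ := sphere_pred (hY hy)
      exact ⟨a, by simp, ha x hx ▸ hxy⟩
  | succ i ih =>
    have hIY : ∀ y ∈ Y, ∀ z ∈ Y, ¬ G.Adj y z := fun y hy z hz h => hI y hy z hz h.ne h
    obtain ⟨U, p, hUX, hdom, hpY, hp⟩ := exists_minimal_dom G (sphere G a (i + 1)) Y
      fun y hy => sphere_pred (hY hy)
    refine ⟨U, hUX, ?_, hdom⟩
    by_contra hcard
    have hR : ramsey k ((l - 1) * gfun k l (i + 1) + 1) ≤ U.card := by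
      rw [gfun] at hcard; omega
    rcases ramsey_fin G U _ _ hR with ⟨e, heU, he⟩ | ⟨e, hinj, heU, he⟩
    · have einj : ∀ s t, e s = e t ↔ s = t := fun s t =>
        ⟨fun h => by by_contra hst; exact (he s t hst).ne h, fun h => h ▸ rfl⟩
      exact kstar_false hK e (p ∘ e) he
        (fun s t => (hp _ (heU s) _ (heU t)).trans (einj s t))
        (fun s t => hIY _ (hpY _ (heU s)) _ (hpY _ (heU t)))
    · obtain ⟨W, hWX, hWc, hWd⟩ := ih (Set.range e)
        (by rintro _ ⟨s, rfl⟩; exact hUX _ (heU s))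
        (by rintro _ ⟨s, rfl⟩ _ ⟨t, rfl⟩ _; exact he s t)
      have hWd' : ∀ s, ∃ w ∈ W, G.Adj w (e s) := fun s => hWd _ ⟨s, rfl⟩
      choose f hfW hf using hWd'
      obtain ⟨w, hw, hlt⟩ := Finset.exists_lt_card_fiber_of_mul_lt_card_of_maps_to
        (s := Finset.univ) (t := W) (f := f) (n := l - 1) (fun s _ => hfW s) (by
          rw [Finset.card_univ, Fintype.card_fin, mul_comm]
          exact Nat.lt_succ_of_le (Nat.mul_le_mul_left _ hWc))
      obtain ⟨d, hd, hdF⟩ := exists_fin_embedding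
        (Finset.univ.filter fun s => f s = w) l (by omega)
      have hfd : ∀ s, f (d s) = w := fun s => (Finset.mem_filter.mp (hdF s)).2
      have hpS : ∀ s, p (e (d s)) ∈ sphere G a (i + 2) := fun s => hY (hpY _ (heU _))
      refine sstar_false hS w (e ∘ d) (fun s => p (e (d s))) (fun s => hfd s ▸ hf (d s))
        (fun s => sphere_not_adj (hWX w hw) (hpS s))
        (fun s => sphere_ne (hWX w hw) (hpS s) (by omega)) (fun s t => he _ _)
        (fun s t => (hp _ (heU _) _ (heU _)).trans ((hinj.comp hd).eq_iff))
        (fun s t => hIY _ (hpY _ (heU _)) _ (hpY _ (heU _)))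

/-- Few vertices of an independent set `X` of neighbours of `u` dominate any set `Z` of
non-neighbours of `u` that `X` dominates. -/
lemma exists_dominating_second {V : Type} [Fintype V] {G : SimpleGraph V} {k l : ℕ}
    (hK : IsEmpty (Kstar k ↪g G)) (hS : IsEmpty (Sstar l ↪g G)) (u : V) (X Z : Set V)
    (hX : ∀ x ∈ X, G.Adj u x) (hI : Indep G X) (hZ : ∀ z ∈ Z, ¬ G.Adj u z) (huZ : u ∉ Z)
    (h : ∀ z ∈ Z, ∃ x ∈ X, G.Adj x z) :
    ∃ T : Finset V, T.card < ramsey k l ∧ ∀ z ∈ Z, ∃ t ∈ T, G.Adj t z := by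
  have hIX : ∀ y ∈ X, ∀ z ∈ X, ¬ G.Adj y z := fun y hy z hz h => hI y hy z hz h.ne h
  obtain ⟨T, p, hTX, hdom, hpZ, hp⟩ := exists_minimal_dom G X Z h
  refine ⟨T, ?_, hdom⟩
  by_contra! hcard
  -- Pulling `G` back along `p` applies Ramsey's theorem to the private neighbours.
  rcases ramsey_fin (G.comap p) T _ _ hcard with ⟨e, heT, he⟩ | ⟨e, hinj, heT, he⟩
  · have einj : ∀ s t, e t = e s ↔ s = t := fun s t =>
      ⟨fun h => by by_contra hst; exact (he s t hst).ne h.symm, fun h => h ▸ rfl⟩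
    exact kstar_false hK (p ∘ e) e he
      (fun s t => (G.adj_comm _ _).trans ((hp _ (heT t) _ (heT s)).trans (einj s t)))
      (fun s t => hIX _ (hTX _ (heT s)) _ (hTX _ (heT t)))
  · exact sstar_false hS u e (p ∘ e) (fun s => hX _ (hTX _ (heT s)))
      (fun s => hZ _ (hpZ _ (heT s)))
      (fun s hs => huZ (by rw [hs]; exact hpZ _ (heT s)))
      (fun s t => hIX _ (hTX _ (heT s)) _ (hTX _ (heT t)))
      (fun s t => (hp _ (heT s) _ (heT t)).trans hinj.eq_iff) he

lemma exists_maximal_indep {V : Type} [Fintype V] (G : SimpleGraph V) (S : Set V) :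
    ∃ Y ⊆ S, Indep G Y ∧ ∀ z ∈ S, z ∈ Y ∨ ∃ y ∈ Y, G.Adj y z := by
  have h0 : (∅ : Set V) ∈ {Y : Set V | Y ⊆ S ∧ Indep G Y} := by simp [Indep]
  obtain ⟨Y, -, hY⟩ := (Set.toFinite {Y : Set V | Y ⊆ S ∧ Indep G Y}).exists_le_maximal h0
  refine ⟨Y, hY.prop.1, hY.prop.2, fun z hz => ?_⟩
  by_contra! hcon
  refine hcon.1 (hY.le_of_ge (y := insert z Y) ⟨Set.insert_subset hz hY.prop.1, ?_⟩
    (Set.subset_insert _ _) (Set.mem_insert _ _))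
  rintro x (rfl | hx) y (rfl | hy) hxy
  · exact (hxy rfl).elim
  · exact fun h => hcon.2 y hy h.symm
  · exact hcon.2 x hx
  · exact hY.prop.2 x hx y hy hxy

/-- **Lemma 2.** In a `{K*_k, S*_ℓ}`-free graph, for `i ≥ 2` the sphere `N^i_G(a)` is
dominated by a set `Û` of at most `f_{k,ℓ}(i)` vertices. -/
theorem exists_dominating_sphere (k l i : ℕ) (hk : 0 < k) (hl : 0 < l) (hi : 2 ≤ i)
    (V : Type) [Fintype V] (G : SimpleGraph V)
    (hK : IsEmpty (Kstar k ↪g G)) (hS : IsEmpty (Sstar l ↪g G)) (a : V) :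
    ∃ U : Set V, U.ncard ≤ ffun k l i ∧ Dominates G U (sphere G a i) := by
  classical
  obtain ⟨i, rfl⟩ : ∃ j, i = j + 1 := ⟨i - 1, by omega⟩
  obtain ⟨Y, hYS, hYI, hYmax⟩ := exists_maximal_indep G (sphere G a (i + 1))
  obtain ⟨U, hUX, hUc, hUd⟩ := exists_dominating_indep hl hK hS a i Y hYS hYI
  have key : ∀ u ∈ U, ∃ T : Finset V, T.card < ramsey k l ∧
      ∀ z ∈ {z | z ∈ sphere G a (i + 1) ∧ ¬ G.Adj u z ∧ ∃ y ∈ Y, G.Adj u y ∧ G.Adj y z},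
        ∃ t ∈ T, G.Adj t z := by
    intro u hu
    refine exists_dominating_second hK hS u {y | y ∈ Y ∧ G.Adj u y} _ (fun x hx => hx.2)
      (fun x hx y hy => hYI x hx.1 y hy.1) (fun z hz => hz.2.1)
      (fun h => sphere_ne (hUX u hu) h.1 (by omega) rfl) ?_
    rintro z ⟨-, -, y, hy, huy, hyz⟩
    exact ⟨y, ⟨hy, huy⟩, hyz⟩
  choose! T hTc hTd using key
  refine ⟨↑(U.biUnion fun u => insert u (T u)), ?_, fun z hz => ?_⟩
  · rw [Set.ncard_coe_finset]
    calc _ ≤ U.card * ramsey k l := Finset.card_biUnion_le_card_mul _ _ _ fun u hu =>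
            (Finset.card_insert_le _ _).trans (hTc u hu)
      _ ≤ ffun k l (i + 1) := by
            rw [ffun, mul_comm]; exact Nat.mul_le_mul_left _ hUc
  · have hmem : ∀ u ∈ U, ∀ w ∈ insert u (T u),
        w ∈ (↑(U.biUnion fun u => insert u (T u)) : Set V) := fun u hu w hw =>
      Finset.mem_coe.mpr (Finset.mem_biUnion.mpr ⟨u, hu, hw⟩)
    rcases hYmax z hz with hzY | ⟨y, hy, hyz⟩
    · obtain ⟨u, hu, huz⟩ := hUd z hzY
      exact ⟨u, hmem u hu u (Finset.mem_insert_self _ _), Or.inr huz⟩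
    · obtain ⟨u, hu, huy⟩ := hUd y hy
      by_cases huz : G.Adj u z
      · exact ⟨u, hmem u hu u (Finset.mem_insert_self _ _), Or.inr huz⟩
      · obtain ⟨t, ht, htz⟩ := hTd u hu z ⟨hz, huz, y, hy, huy, hyz⟩
        exact ⟨t, hmem u hu t (Finset.mem_insert_of_mem ht), Or.inr htz⟩
end

section
/- Let μ be an isomorphism-invariant graph invariant taking nonnegative real values, and suppose there exist positive real constants c₁ and c₂ such that c₁·γ(G) ≤ μ(G) ≤ c₂·γ(G) for every finite connected graph G. Let 𝓗 be a set of connected simple graphs. Then there exists a constant c' = c'(μ, 𝓗) such that every connected 𝓗-free graph G satisfies μ(G) ≤ c' if and only if there exist positive integers k, ℓ and m such that 𝓗 ≤ {K*_k, S*_ℓ, P_m}. -/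
/-!
For the forward direction, `K*_n`, `S*_n` and `P_{3n}` are connected and contain `n` vertices with
pairwise disjoint closed neighborhoods, so their domination number is at least `n`; once `n` is so
large that `c₁ * n` exceeds the bound on `μ`, none of the three can be `𝓗`-free.

For the backward direction, an `𝓗`-free graph `G` contains none of `K*_k`, `S*_l`, `P_m`.
The key local fact (`exists_small_dominating`) is: if `X` consists of neighbors of `u`, `Z` avoids
the closed neighborhood of `u`, every vertex of `Z` has a neighbor in `X`, and one of `X`, `Z` is
independent, then boundedly many vertices of `X` suffice to dominate `Z`. In a minimal dominating
subset every `x` has a private neighbor `z x`; Ramsey's theorem applied to whichever side is not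
known to be independent yields a `K*_k` (clique) or an `S*_l` centered at `u` (independent set).

To dominate the vertices `Y` at distance two from `u` (`exists_dominating_second`), take a maximal
independent `I ⊆ Y`. Boundedly many neighbors `x` of `u` dominate `I`, because `I` is independent.
Any other vertex of `Y` has a neighbor in `I ∩ N(x)` for one such `x`; as `I ∩ N(x)` is an
independent set of neighbors of `x`, boundedly many of its vertices dominate what `x` itself does
not. Hence every ball of radius two is dominated by `B` vertices, where `B` depends only on `k` and
`l`, and by induction a ball of radius `n` is dominated by `B ^ n` vertices. Since shortest paths
are induced, excluding `P_m` forces every distance to be less than `m`.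
-/

open SimpleGraph Finset

/-! ### Lower bounds on the domination number -/

/-- A family of `n` vertices with pairwise disjoint closed neighborhoods forces `γ(G) ≥ n`. -/
lemma le_domNum_of_packing {V : Type} [Fintype V] (G : SimpleGraph V) (n : ℕ) (f : Fin n → V)
    (h : ∀ i j u, (u = f i ∨ G.Adj u (f i)) → (u = f j ∨ G.Adj u (f j)) → i = j) :
    n ≤ domNum G := by
  refine le_csInf ⟨_, Set.univ, rfl, fun y _ => ⟨y, trivial, Or.inl rfl⟩⟩ ?_
  rintro _ ⟨S, rfl, hS⟩
  choose g hg hg' using fun i => hS (f i) trivial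
  have hinj : Function.Injective g := fun i j hij =>
    h i j (g i) (hg' i) (by rw [hij]; exact hg' j)
  have hsub : Set.range g ⊆ S := by rintro _ ⟨i, rfl⟩; exact hg i
  have := Set.ncard_le_ncard hsub S.toFinite
  rwa [← Set.image_univ, Set.ncard_image_of_injective _ hinj, Set.ncard_univ, Nat.card_fin] at this

lemma domNum_le {V : Type} [Fintype V] (G : SimpleGraph V) (D : Finset V)
    (h : Dominates G D Set.univ) : domNum G ≤ #D :=
  Nat.sInf_le ⟨D, Set.ncard_coe_finset D, h⟩

lemma Kstar_connected (n : ℕ) (hn : 0 < n) : (Kstar n).Connected := by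
  have key : ∀ v, (Kstar n).Reachable (Sum.inl ⟨0, hn⟩) v := by
    have h1 : ∀ i, (Kstar n).Reachable (Sum.inl ⟨0, hn⟩) (Sum.inl i) := by
      intro i
      by_cases h : (⟨0, hn⟩ : Fin n) = i
      · rw [h]
      · exact Adj.reachable (by simp [Kstar, h])
    rintro (i | i)
    · exact h1 i
    · exact (h1 i).trans (Adj.reachable (by simp [Kstar]))
  exact (connected_iff_exists_forall_reachable _).2 ⟨_, key⟩

lemma Sstar_connected (n : ℕ) : (Sstar n).Connected := by
  have key : ∀ v, (Sstar n).Reachable none v := by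
    have h1 : ∀ i, (Sstar n).Reachable none (some (Sum.inl i)) :=
      fun i => Adj.reachable (by simp [Sstar])
    rintro (_ | i | i)
    · rfl
    · exact h1 i
    · exact (h1 i).trans (Adj.reachable (by simp [Sstar]))
  exact (connected_iff_exists_forall_reachable _).2 ⟨_, key⟩

lemma le_domNum_Kstar (n : ℕ) : n ≤ domNum (Kstar n) := by
  refine le_domNum_of_packing _ n Sum.inr ?_
  rintro i j (u | u) <;> simp [Kstar] <;> grind

lemma le_domNum_Sstar (n : ℕ) : n ≤ domNum (Sstar n) := by
  refine le_domNum_of_packing _ n (fun i => some (Sum.inr i)) ?_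
  rintro i j (_ | u | u) <;> simp [Sstar] <;> grind

lemma le_domNum_pathGraph (n : ℕ) : n ≤ domNum (pathGraph (3 * n)) := by
  refine le_domNum_of_packing _ n (fun i => ⟨3 * i, by omega⟩) ?_
  intro i j u
  simp only [pathGraph_adj, Fin.ext_iff]
  omega

/-! ### Ramsey's theorem and induced copies of the three graphs -/

/-- Ramsey's theorem, for finite sets of vertices of arbitrary graphs. -/
lemma exists_ramsey (k l : ℕ) : ∃ N : ℕ, ∀ (α : Type) (G : SimpleGraph α) (S : Finset α), N ≤ #S →
    (∃ A ⊆ S, #A = k ∧ ∀ a ∈ A, ∀ b ∈ A, a ≠ b → G.Adj a b) ∨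
    (∃ A ⊆ S, #A = l ∧ ∀ a ∈ A, ∀ b ∈ A, a ≠ b → ¬ G.Adj a b) := by
  classical
  induction k generalizing l with
  | zero => exact ⟨0, fun α G S _ => Or.inl ⟨∅, by simp⟩⟩
  | succ k ihk =>
    induction l with
    | zero => exact ⟨0, fun α G S _ => Or.inr ⟨∅, by simp⟩⟩
    | succ l ihl =>
      obtain ⟨N₁, h₁⟩ := ihk (l + 1)
      obtain ⟨N₂, h₂⟩ := ihl
      refine ⟨N₁ + N₂ + 1, fun α G S hS => ?_⟩
      obtain ⟨v, hv⟩ : S.Nonempty := card_pos.1 (by omega)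
      have hc := card_filter_add_card_filter_not (s := S.erase v) (fun w => G.Adj v w)
      rw [card_erase_of_mem hv] at hc
      by_cases hN : N₁ ≤ #{w ∈ S.erase v | G.Adj v w}
      · rcases h₁ α G _ hN with ⟨A, hA, hc, h⟩ | ⟨A, hA, hc, h⟩
        · have hA' : ∀ a ∈ A, a ≠ v ∧ a ∈ S ∧ G.Adj v a := fun a ha => by
            simpa [and_assoc] using hA ha
          refine Or.inl ⟨insert v A, ?_, ?_, ?_⟩
          · intro a ha
            grind
          · rw [card_insert_of_notMem (fun h => (hA' v h).1 rfl), hc]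
          · intro a ha b hb hab
            have := G.adj_comm a b
            grind
        · exact Or.inr ⟨A, fun a ha => by have := hA ha; grind, hc, h⟩
      · rcases h₂ α G {w ∈ S.erase v | ¬ G.Adj v w} (by omega) with
          ⟨A, hA, hc, h⟩ | ⟨A, hA, hc, h⟩
        · exact Or.inl ⟨A, fun a ha => by have := hA ha; grind, hc, h⟩
        · have hA' : ∀ a ∈ A, a ≠ v ∧ a ∈ S ∧ ¬ G.Adj v a := fun a ha => by
            simpa [and_assoc] using hA ha
          refine Or.inr ⟨insert v A, ?_, ?_, ?_⟩
          · intro a ha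
            grind
          · rw [card_insert_of_notMem (fun h => (hA' v h).1 rfl), hc]
          · intro a ha b hb hab
            have := G.adj_comm a b
            grind

lemma Kstar_embeds {V : Type} (G : SimpleGraph V) (k : ℕ) (x y : Fin k → V)
    (hx : ∀ i j, i ≠ j → G.Adj (x i) (x j)) (hxy : ∀ i j, G.Adj (x i) (y j) ↔ i = j)
    (hy : ∀ i j, ¬ G.Adj (y i) (y j)) : Nonempty (Kstar k ↪g G) := by
  have hxinj : ∀ i j, x i = x j → i = j := fun i j h => by
    by_contra hij
    exact (hx i j hij).ne h
  have hyinj : ∀ i j, y i = y j → i = j := fun i j h => by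
    rw [← hxy, ← h, hxy]
  have hne : ∀ i j, x i ≠ y j := fun i j h => hy j i (by rw [← h, hxy])
  refine ⟨⟨⟨Sum.elim x y, ?_⟩, ?_⟩⟩
  · rintro (i | i) (j | j) h
    · exact congrArg _ (hxinj i j h)
    · exact (hne i j h).elim
    · exact (hne j i h.symm).elim
    · exact congrArg _ (hyinj i j h)
  · intro v w
    change G.Adj (Sum.elim x y v) (Sum.elim x y w) ↔ _
    rcases v with i | i <;> rcases w with j | j
    · simp only [Sum.elim_inl, Kstar, fromRel_adj]
      exact ⟨fun h => ⟨fun h' => h.ne (by rw [Sum.inl.inj h']), by simp⟩,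
        fun h => hx i j fun h' => h.1 (by rw [h'])⟩
    · simp [Kstar, hxy]
    · simp [Kstar, G.adj_comm (y i), hxy]
    · simp [Kstar, hy]

lemma Sstar_embeds {V : Type} (G : SimpleGraph V) (l : ℕ) (u : V) (x z : Fin l → V)
    (hux : ∀ i, G.Adj u (x i)) (huz : ∀ i, ¬ G.Adj u (z i)) (hne : ∀ i, u ≠ z i)
    (hx : ∀ i j, ¬ G.Adj (x i) (x j)) (hxz : ∀ i j, G.Adj (x i) (z j) ↔ i = j)
    (hz : ∀ i j, ¬ G.Adj (z i) (z j)) : Nonempty (Sstar l ↪g G) := by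
  have hxinj : ∀ i j, x i = x j → i = j := fun i j h => by
    rw [← hxz, h, hxz]
  have hzinj : ∀ i j, z i = z j → i = j := fun i j h => by
    rw [← hxz, ← h, hxz]
  have hxz' : ∀ i j, x i ≠ z j := fun i j h => huz j (h ▸ hux i)
  have hux' : ∀ i, u ≠ x i := fun i => (hux i).ne
  refine ⟨⟨⟨fun v => v.elim u (Sum.elim x z), ?_⟩, ?_⟩⟩
  · rintro (_ | i | i) (_ | j | j) h <;> simp at h ⊢ <;> grind
  · intro v w
    change G.Adj (v.elim u (Sum.elim x z)) (w.elim u (Sum.elim x z)) ↔ _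
    rcases v with _ | i | i <;> rcases w with _ | j | j <;>
      simp [Sstar, hux, huz, hx, hxz, hz, G.adj_comm (z _), G.adj_comm (x _) u]

/-- In a connected graph without an induced `P_m`, all distances are less than `m`. -/
lemma dist_lt_of_not_path {V : Type} (G : SimpleGraph V) (hG : G.Connected) (m : ℕ)
    (hP : IsEmpty (pathGraph m ↪g G)) (a v : V) : G.dist a v < m := by
  by_contra! hm
  obtain ⟨p, hp⟩ := hG.exists_walk_length_eq_dist a v
  -- The distance between two vertices of a shortest walk is the difference of their positions.
  have hd : ∀ i ≤ p.length, G.dist a (p.getVert i) = i := fun i hi => by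
    have h1 := dist_le (p.take i)
    have h2 := dist_le (p.drop i)
    have h3 := hG.dist_triangle (u := a) (v := p.getVert i) (w := v)
    rw [Walk.take_length] at h1
    rw [Walk.drop_length] at h2
    omega
  refine hP.false ⟨⟨fun i => p.getVert i, ?_⟩, ?_⟩
  · intro i j hij
    have h1 := hd i (by omega)
    have h2 := hd j (by omega)
    simp only at hij
    rw [hij] at h1
    exact Fin.ext (by omega)
  · intro i j
    have h1 := hd i (by omega)
    have h2 := hd j (by omega)
    change G.Adj (p.getVert i) (p.getVert j) ↔ _
    rw [pathGraph_adj]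
    constructor
    · intro h
      have h3 := hG.dist_triangle (u := a) (v := p.getVert i) (w := p.getVert j)
      have h4 := hG.dist_triangle (u := a) (v := p.getVert j) (w := p.getVert i)
      rw [dist_comm (u := p.getVert j), dist_eq_one_iff_adj.2 h] at h4
      rw [dist_eq_one_iff_adj.2 h] at h3
      have h5 : (i : ℕ) ≠ j := fun h' => h.ne (by rw [h'])
      omega
    · rintro (h | h)
      · have := p.adj_getVert_succ (i := i) (by omega)
        rwa [h] at this
      · have := p.adj_getVert_succ (i := j) (by omega)
        rw [h] at this
        exact this.symm

/-! ### Bounding the domination number -/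

/-- A dominating set contains a minimal one, in which every vertex has a private neighbor. -/
lemma exists_private {V : Type} (G : SimpleGraph V) (Z : Set V) (X : Finset V)
    (hX : ∀ z ∈ Z, ∃ x ∈ X, G.Adj x z) :
    ∃ X' ⊆ X, (∀ z ∈ Z, ∃ x ∈ X', G.Adj x z) ∧
      ∀ x ∈ X', ∃ z ∈ Z, G.Adj x z ∧ ∀ x' ∈ X', G.Adj x' z → x' = x := by
  classical
  induction X using Finset.strongInduction with
  | H X ih =>
    by_cases h : ∃ x ∈ X, ∀ z ∈ Z, ∃ x' ∈ X.erase x, G.Adj x' z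
    · obtain ⟨x, hx, h⟩ := h
      obtain ⟨X', h1, h2⟩ := ih _ (erase_ssubset hx) h
      exact ⟨X', h1.trans (erase_subset _ _), h2⟩
    · push Not at h
      refine ⟨X, Subset.rfl, hX, fun x hx => ?_⟩
      obtain ⟨z, hz, h⟩ := h x hx
      obtain ⟨x', hx', hadj⟩ := hX z hz
      have key : ∀ x' ∈ X, G.Adj x' z → x' = x := fun w hw hwz => by
        by_contra hne
        exact h w (mem_erase.2 ⟨hne, hw⟩) hwz
      exact ⟨z, hz, key x' hx' hadj ▸ hadj, key⟩

/-- If `X ⊆ N(u)` dominates `Z`, where `Z` avoids `N[u]` and one of `X`, `Z` is independent, then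
at most `N` vertices of `X` dominate `Z`, where `N` is a Ramsey bound for `k` and `l`. -/
lemma exists_small_dominating (k l N : ℕ)
    (hN : ∀ (α : Type) (G : SimpleGraph α) (S : Finset α), N ≤ #S →
      (∃ A ⊆ S, #A = k ∧ ∀ a ∈ A, ∀ b ∈ A, a ≠ b → G.Adj a b) ∨
      (∃ A ⊆ S, #A = l ∧ ∀ a ∈ A, ∀ b ∈ A, a ≠ b → ¬ G.Adj a b))
    {V : Type} (G : SimpleGraph V) (hK : IsEmpty (Kstar k ↪g G)) (hS : IsEmpty (Sstar l ↪g G))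
    (u : V) (X : Finset V) (Z : Set V) (hX : ∀ x ∈ X, G.Adj u x)
    (hZ : ∀ z ∈ Z, u ≠ z ∧ ¬ G.Adj u z) (hXZ : ∀ z ∈ Z, ∃ x ∈ X, G.Adj x z)
    (hI : Indep G X ∨ Indep G Z) :
    ∃ X' ⊆ X, #X' ≤ N ∧ ∀ z ∈ Z, ∃ x ∈ X', G.Adj x z := by
  obtain ⟨X', hsub, hdom, hpriv⟩ := exists_private G Z X hXZ
  refine ⟨X', hsub, ?_, hdom⟩
  by_contra! hlt
  have : ∃ z : V → V, ∀ x ∈ X', z x ∈ Z ∧ G.Adj x (z x) ∧ ∀ x' ∈ X', G.Adj x' (z x) → x' = x := by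
    choose! z hz using hpriv
    exact ⟨z, hz⟩
  obtain ⟨z, hz⟩ := this
  -- The edges between `X'` and the private neighbors form a perfect matching.
  have hmatch : ∀ A ⊆ X', ∀ a ∈ A, ∀ b ∈ A, (G.Adj a (z b) ↔ a = b) := fun A hA a ha b hb =>
    ⟨fun h => (hz b (hA hb)).2.2 a (hA ha) h, fun h => h ▸ (hz a (hA ha)).2.1⟩
  have enum : ∀ (n : ℕ) (A : Finset V), #A = n →
      ∃ f : Fin n → V, Function.Injective f ∧ ∀ i, f i ∈ A := fun n A hA =>
    ⟨fun i => (A.equivFinOfCardEq hA).symm i,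
      Subtype.val_injective.comp (Equiv.injective _), fun i => Subtype.prop _⟩
  have star : ∀ A ⊆ X', #A = l → (∀ a ∈ A, ∀ b ∈ A, a ≠ b → ¬ G.Adj a b) →
      (∀ a ∈ A, ∀ b ∈ A, a ≠ b → ¬ G.Adj (z a) (z b)) → False := by
    intro A hA hc h1 h2
    obtain ⟨f, hf, hfA⟩ := enum l A hc
    refine not_nonempty_iff.2 hS (Sstar_embeds G l u f (fun i => z (f i))
      (fun i => hX _ (hsub (hA (hfA i)))) (fun i => (hZ _ (hz _ (hA (hfA i))).1).2)
      (fun i => (hZ _ (hz _ (hA (hfA i))).1).1) (fun i j h => h1 _ (hfA i) _ (hfA j) h.ne h)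
      (fun i j => (hmatch A hA _ (hfA i) _ (hfA j)).trans hf.eq_iff)
      (fun i j h => h2 _ (hfA i) _ (hfA j) (fun e => h.ne (by rw [e])) h))
  rcases hI with hI | hI
  · have hind : ∀ a ∈ X', ∀ b ∈ X', a ≠ b → ¬ G.Adj a b := fun a ha b hb =>
      hI a (hsub ha) b (hsub hb)
    rcases hN V (G.comap z) X' hlt.le with ⟨A, hA, hc, h⟩ | ⟨A, hA, hc, h⟩
    -- In the clique case, the private neighbors form the clique of `K*_k` and `A` is pendant.
    · obtain ⟨f, hf, hfA⟩ := enum k A hc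
      exact not_nonempty_iff.2 hK (Kstar_embeds G k (fun i => z (f i)) f
        (fun i j hij => h _ (hfA i) _ (hfA j) (hf.ne hij))
        (fun i j => (G.adj_comm _ _).trans <| (hmatch A hA _ (hfA j) _ (hfA i)).trans <|
          hf.eq_iff.trans eq_comm)
        (fun i j h => hind _ (hA (hfA i)) _ (hA (hfA j)) h.ne h))
    · exact star A hA hc (fun a ha b hb => hind a (hA ha) b (hA hb)) h
  · have hind : ∀ a ∈ X', ∀ b ∈ X', ¬ G.Adj (z a) (z b) := fun a ha b hb h =>
      hI _ (hz a ha).1 _ (hz b hb).1 h.ne h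
    rcases hN V G X' hlt.le with ⟨A, hA, hc, h⟩ | ⟨A, hA, hc, h⟩
    · obtain ⟨f, hf, hfA⟩ := enum k A hc
      exact not_nonempty_iff.2 hK (Kstar_embeds G k f (fun i => z (f i))
        (fun i j hij => h _ (hfA i) _ (hfA j) (hf.ne hij))
        (fun i j => (hmatch A hA _ (hfA i) _ (hfA j)).trans hf.eq_iff)
        (fun i j => hind _ (hA (hfA i)) _ (hA (hfA j))))
    · exact star A hA hc h (fun a ha b hb _ => hind a (hA ha) b (hA hb))

/-- Every finite set of vertices contains an independent set dominating it. -/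
lemma exists_indep_dominating {V : Type} (G : SimpleGraph V) (Y : Finset V) :
    ∃ I ⊆ Y, Indep G I ∧ ∀ y ∈ Y, y ∈ I ∨ ∃ x ∈ I, G.Adj x y := by
  classical
  induction Y using Finset.induction_on with
  | empty => exact ⟨∅, by simp [Indep]⟩
  | insert v Y hv ih =>
    obtain ⟨I, hI, hind, hdom⟩ := ih
    by_cases h : ∃ x ∈ I, G.Adj x v
    · refine ⟨I, hI.trans (subset_insert _ _), hind, fun y hy => ?_⟩
      rcases mem_insert.1 hy with rfl | hy
      · exact Or.inr h
      · exact hdom y hy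
    · push Not at h
      refine ⟨insert v I, insert_subset_insert _ hI, ?_, ?_⟩
      · intro x hx y hy hxy hadj
        rcases mem_insert.1 (mem_coe.1 hx) with rfl | hx' <;>
          rcases mem_insert.1 (mem_coe.1 hy) with rfl | hy'
        · exact hxy rfl
        · exact h y hy' hadj.symm
        · exact h x hx' hadj
        · exact hind x hx' y hy' hxy hadj
      · intro y hy
        rcases mem_insert.1 hy with rfl | hy
        · exact Or.inl (mem_insert_self _ _)
        · rcases hdom y hy with h | ⟨x, hx, h⟩
          · exact Or.inl (mem_insert_of_mem h)
          · exact Or.inr ⟨x, mem_insert_of_mem hx, h⟩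

/-- The ball of radius two around any vertex `u` is dominated by boundedly many vertices. -/
lemma exists_dominating_second_s16 (k l : ℕ) : ∃ B : ℕ, ∀ (V : Type) [Fintype V] (G : SimpleGraph V),
    IsEmpty (Kstar k ↪g G) → IsEmpty (Sstar l ↪g G) → ∀ u : V,
    ∃ D : Finset V, #D ≤ B ∧ ∀ v w, (u = w ∨ G.Adj u w) → (w = v ∨ G.Adj w v) →
      ∃ d ∈ D, d = v ∨ G.Adj d v := by
  classical
  obtain ⟨N, hN⟩ := exists_ramsey k l
  refine ⟨N * (N + 1) + 1, fun V _ G hK hS u => ?_⟩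
  have loc := exists_small_dominating k l N hN G hK hS
  let Y : Finset V := {v | u ≠ v ∧ ¬ G.Adj u v ∧ ∃ w, G.Adj u w ∧ G.Adj w v}
  have hY : ∀ v, v ∈ Y ↔ u ≠ v ∧ ¬ G.Adj u v ∧ ∃ w, G.Adj u w ∧ G.Adj w v := by simp [Y]
  obtain ⟨I, hIY, hind, hdom⟩ := exists_indep_dominating G Y
  obtain ⟨X, hX, hXc, hXI⟩ := loc u ({w | G.Adj u w} : Finset V) I (by simp)
    (fun z hz => ⟨((hY z).1 (hIY hz)).1, ((hY z).1 (hIY hz)).2.1⟩)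
    (fun z hz => by simpa using ((hY z).1 (hIY hz)).2.2) (Or.inr hind)
  -- For each `x ∈ X`, few of its neighbors in `I` dominate what `I ∩ N(x)` dominates outside `N[x]`.
  have hloc : ∀ x, ∃ T : Finset V, #T ≤ N ∧ ∀ y, x ≠ y → ¬ G.Adj x y →
      (∃ i ∈ I, G.Adj x i ∧ G.Adj i y) → ∃ t ∈ T, G.Adj t y := by
    intro x
    obtain ⟨T, -, hTc, hT⟩ := loc x {i ∈ I | G.Adj x i}
      {y | x ≠ y ∧ ¬ G.Adj x y ∧ ∃ i ∈ I, G.Adj x i ∧ G.Adj i y} (by simp)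
      (fun z hz => ⟨hz.1, hz.2.1⟩)
      (fun z hz => by
        obtain ⟨i, hi, h1, h2⟩ := hz.2.2
        exact ⟨i, mem_filter.2 ⟨hi, h1⟩, h2⟩)
      (Or.inl fun a ha b hb =>
        hind a (mem_filter.1 (mem_coe.1 ha)).1 b (mem_filter.1 (mem_coe.1 hb)).1)
    exact ⟨T, hTc, fun y h1 h2 h3 => hT y ⟨h1, h2, h3⟩⟩
  choose T hTc hT using hloc
  refine ⟨insert u (X.biUnion fun x => insert x (T x)), ?_, ?_⟩
  · refine (card_insert_le _ _).trans (Nat.add_le_add_right ?_ 1)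
    refine (card_biUnion_le_card_mul _ _ (N + 1) fun x _ => ?_).trans
      (Nat.mul_le_mul_right _ hXc)
    exact (card_insert_le _ _).trans (Nat.add_le_add_right (hTc x) 1)
  · intro v w huw hwv
    by_cases h : u = v ∨ G.Adj u v
    · exact ⟨u, mem_insert_self _ _, h⟩
    push Not at h
    have hvY : v ∈ Y := by
      refine (hY v).2 ⟨h.1, h.2, ?_⟩
      rcases huw with rfl | huw
      · exact absurd hwv (not_or.2 h)
      · rcases hwv with rfl | hwv
        · exact absurd huw h.2
        · exact ⟨w, huw, hwv⟩
    have hmem : ∀ x ∈ X, ∀ d ∈ insert x (T x),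
        d ∈ insert u (X.biUnion fun x => insert x (T x)) := fun x hx d hd =>
      mem_insert_of_mem (mem_biUnion.2 ⟨x, hx, hd⟩)
    rcases hdom v hvY with hv | ⟨i, hi, hiv⟩
    · obtain ⟨x, hx, hxv⟩ := hXI v hv
      exact ⟨x, hmem x hx x (mem_insert_self _ _), Or.inr hxv⟩
    · obtain ⟨x, hx, hxi⟩ := hXI i hi
      by_cases hxv : x = v ∨ G.Adj x v
      · exact ⟨x, hmem x hx x (mem_insert_self _ _), hxv⟩
      · push Not at hxv
        obtain ⟨t, ht, htv⟩ := hT x v hxv.1 hxv.2 ⟨i, hi, hxi, hiv⟩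
        exact ⟨t, hmem x hx t (mem_insert_of_mem ht), Or.inr htv⟩

/-- Connected graphs without induced `K*_k`, `S*_l`, `P_m` have bounded domination number. -/
lemma exists_domNum_bound (k l m : ℕ) : ∃ C : ℕ, ∀ (V : Type) [Fintype V] (G : SimpleGraph V),
    G.Connected → IsEmpty (Kstar k ↪g G) → IsEmpty (Sstar l ↪g G) →
    IsEmpty (pathGraph m ↪g G) → domNum G ≤ C := by
  classical
  obtain ⟨B, hB⟩ := exists_dominating_second_s16 k l
  refine ⟨B ^ m, fun V _ G hG hK hS hP => ?_⟩
  choose D hDc hD using hB V G hK hS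
  obtain ⟨a⟩ := hG.nonempty
  have ball : ∀ n, ∃ E : Finset V, #E ≤ B ^ n ∧
      ∀ v, G.dist a v ≤ n → ∃ e ∈ E, e = v ∨ G.Adj e v := by
    intro n
    induction n with
    | zero =>
      refine ⟨{a}, by simp, fun v hv => ⟨a, mem_singleton_self a, Or.inl ?_⟩⟩
      exact hG.dist_eq_zero_iff.1 (by omega)
    | succ n ih =>
      obtain ⟨E, hEc, hE⟩ := ih
      refine ⟨E.biUnion D, ?_, fun v hv => ?_⟩
      · rw [pow_succ]
        exact (card_biUnion_le_card_mul _ _ B fun x _ => hDc x).trans (Nat.mul_le_mul_right _ hEc)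
      · obtain ⟨w, hw, hwv⟩ : ∃ w, G.dist a w ≤ n ∧ (w = v ∨ G.Adj w v) := by
          by_cases hn : G.dist a v ≤ n
          · exact ⟨v, hn, Or.inl rfl⟩
          · obtain ⟨p, hp⟩ := hG.exists_walk_length_eq_dist a v
            refine ⟨p.getVert n, ?_, Or.inr ?_⟩
            · have := dist_le (p.take n)
              rw [Walk.take_length] at this
              omega
            · have := p.adj_getVert_succ (i := n) (by omega)
              rwa [show n + 1 = p.length by omega, Walk.getVert_length] at this
        obtain ⟨e, he, hew⟩ := hE w hw
        obtain ⟨d, hd, hdv⟩ := hD e v w hew hwv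
        exact ⟨d, mem_biUnion.2 ⟨e, he, hd⟩, hdv⟩
  obtain ⟨E, hEc, hE⟩ := ball m
  exact (domNum_le G E fun v _ => hE v (dist_lt_of_not_path G hG m hP a v).le).trans hEc

/-- **Theorem 2.** Let `μ` be an isomorphism-invariant nonnegative graph invariant with
`c₁·γ(G) ≤ μ(G) ≤ c₂·γ(G)` for all finite connected graphs `G`. For a set `𝓗` of
connected finite graphs, `μ` is bounded by a constant on connected `𝓗`-free graphs iff
`𝓗 ≤ {K*_k, S*_ℓ, P_m}` for some positive integers `k`, `ℓ`, `m`. -/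
theorem mu_bounded_iff (μ : ∀ (V : Type) [Fintype V], SimpleGraph V → ℝ)
    (hinv : ∀ (V W : Type) [Fintype V] [Fintype W]
      (G : SimpleGraph V) (G' : SimpleGraph W), Nonempty (G ≃g G') → μ V G = μ W G')
    (hnonneg : ∀ (V : Type) [Fintype V] (G : SimpleGraph V), 0 ≤ μ V G)
    (c₁ c₂ : ℝ) (hc₁ : 0 < c₁) (hc₂ : 0 < c₂)
    (hlow : ∀ (V : Type) [Fintype V] (G : SimpleGraph V), G.Connected →
      c₁ * (domNum G : ℝ) ≤ μ V G)
    (hhigh : ∀ (V : Type) [Fintype V] (G : SimpleGraph V), G.Connected →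
      μ V G ≤ c₂ * (domNum G : ℝ))
    (𝓗 : Set FinGraph) (hconn : ∀ H ∈ 𝓗, H.2.Connected) :
    (∃ c' : ℝ, ∀ (V : Type) [Fintype V], ∀ G : SimpleGraph V,
        G.Connected → HFree 𝓗 G → μ V G ≤ c') ↔
    ∃ k l m : ℕ, 0 < k ∧ 0 < l ∧ 0 < m ∧
      (∃ H ∈ 𝓗, Nonempty (H.2 ↪g Kstar k)) ∧
      (∃ H ∈ 𝓗, Nonempty (H.2 ↪g Sstar l)) ∧
      (∃ H ∈ 𝓗, Nonempty (H.2 ↪g pathGraph m)) := by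
  constructor
  · rintro ⟨c', hc'⟩
    obtain ⟨n, hn⟩ := exists_nat_gt (c' / c₁)
    have hn1 : c' < c₁ * ((n + 1 : ℕ) : ℝ) := by
      have := (div_lt_iff₀ hc₁).1 hn
      push_cast
      nlinarith
    -- Since `c₁ * (n + 1) > c'`, domination number at least `n + 1` rules out being `𝓗`-free.
    have key : ∀ (V : Type) [Fintype V] (G : SimpleGraph V), G.Connected → n + 1 ≤ domNum G →
        ∃ H ∈ 𝓗, Nonempty (H.2 ↪g G) := by
      intro V _ G hG hd
      by_contra! hno
      have h1 := hc' V G hG hno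
      have h2 := hlow V G hG
      have h3 : c₁ * ((n + 1 : ℕ) : ℝ) ≤ c₁ * (domNum G : ℝ) :=
        mul_le_mul_of_nonneg_left (Nat.cast_le.2 hd) hc₁.le
      linarith
    exact ⟨n + 1, n + 1, 3 * (n + 1), by omega, by omega, by omega,
      key _ _ (Kstar_connected _ (by omega)) (le_domNum_Kstar _),
      key _ _ (Sstar_connected _) (le_domNum_Sstar _),
      key _ _ (pathGraph_connected (3 * n + 2)) (le_domNum_pathGraph _)⟩
  · rintro ⟨k, l, m, -, -, -, ⟨H₁, hH₁, ⟨e₁⟩⟩, ⟨H₂, hH₂, ⟨e₂⟩⟩, ⟨H₃, hH₃, ⟨e₃⟩⟩⟩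
    obtain ⟨C, hC⟩ := exists_domNum_bound k l m
    refine ⟨c₂ * C, fun V _ G hG hfree => (hhigh V G hG).trans ?_⟩
    refine mul_le_mul_of_nonneg_left (Nat.cast_le.2 (hC V G hG ?_ ?_ ?_)) hc₂.le
    · exact ⟨fun e => (hfree H₁ hH₁).false (e.comp e₁)⟩
    · exact ⟨fun e => (hfree H₂ hH₂).false (e.comp e₂)⟩
    · exact ⟨fun e => (hfree H₃ hH₃).false (e.comp e₃)⟩
end
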